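/- Let a, b be real numbers with 0 < a ≤ 1 and b ≥ 1, and let X be a random variable whose law has density f(x) = x^{a−1}·(1−x)^{b−1}/Z on (0,1) (and 0 elsewhere) with respect to Lebesgue measure, where Z = ∫_0^1 x^{a−1}(1−x)^{b−1} dx is the normalizing constant (so X is Beta(a,b)-distributed). Then for every integer S ≥ 2, E[ |X − 1/S| ] ≥ 1/(6S). -/

import Mathlib

open MeasureTheory

lemma stmt9_integrable (a b : ℝ) (ha0 : 0 < a) (hb : 1 ≤ b) :
    IntegrableOn (fun x : ℝ => x ^ (a - 1) * (1 - x) ^ (b - 1)) (Set.Ioo 0 1) := by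
  have h1 : IntegrableOn (fun x : ℝ => x ^ (a - 1)) (Set.Ioo 0 1) := by
    have h := intervalIntegral.intervalIntegrable_rpow' (a := 0) (b := 1)
      (show -1 < a - 1 by linarith)
    rw [intervalIntegrable_iff_integrableOn_Ioo_of_le (by norm_num)] at h
    exact h
  refine Integrable.mono' h1 (Measurable.aestronglyMeasurable (by fun_prop)) ?_
  refine ae_restrict_of_forall_mem measurableSet_Ioo (fun x hx => ?_)
  have hx0 : 0 ≤ x ^ (a - 1) := Real.rpow_nonneg hx.1.le _
  have hx1 : 0 ≤ (1 - x) ^ (b - 1) := Real.rpow_nonneg (by linarith [hx.2]) _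
  have hx2 : (1 - x) ^ (b - 1) ≤ 1 :=
    Real.rpow_le_one (by linarith [hx.2]) (by linarith [hx.1]) (by linarith)
  rw [Real.norm_of_nonneg (mul_nonneg hx0 hx1)]
  exact mul_le_of_le_one_right hx0 hx2

lemma stmt9_anti (a b : ℝ) (ha1 : a ≤ 1) (hb : 1 ≤ b) {x y : ℝ} (hx : 0 < x) (hxy : x ≤ y)
    (hy : y < 1) :
    y ^ (a - 1) * (1 - y) ^ (b - 1) ≤ x ^ (a - 1) * (1 - x) ^ (b - 1) := by
  apply mul_le_mul
  · exact Real.rpow_le_rpow_of_nonpos hx hxy (by linarith)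
  · exact Real.rpow_le_rpow (by linarith) (by linarith) (by linarith)
  · exact Real.rpow_nonneg (by linarith) _
  · exact Real.rpow_nonneg (by linarith) _

lemma stmt9_key (a b : ℝ) (ha0 : 0 < a) (ha1 : a ≤ 1) (hb : 1 ≤ b) (c : ℝ) (hc : 0 < c)
    (hc2 : c ≤ 1 / 2) :
    c / 6 * (∫ x in Set.Ioo (0 : ℝ) 1, x ^ (a - 1) * (1 - x) ^ (b - 1)) ≤
      ∫ x in Set.Ioo (0 : ℝ) 1, |x - c| * (x ^ (a - 1) * (1 - x) ^ (b - 1)) := by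
  have hg := stmt9_integrable a b ha0 hb
  set g : ℝ → ℝ := fun x => x ^ (a - 1) * (1 - x) ^ (b - 1) with hgdef
  have hg0 : ∀ x ∈ Set.Ioo (0 : ℝ) 1, 0 ≤ g x := fun x hx =>
    mul_nonneg (Real.rpow_nonneg hx.1.le _) (Real.rpow_nonneg (by linarith [hx.2]) _)
  have hanti : ∀ x y : ℝ, 0 < x → x ≤ y → y < 1 → g y ≤ g x := fun x y h1 h2 h3 =>
    stmt9_anti a b ha1 hb h1 h2 h3
  have hgi : IntegrableOn (fun x => |x - c| * g x) (Set.Ioo 0 1) := by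
    refine Integrable.mono' hg (Measurable.aestronglyMeasurable (by fun_prop)) ?_
    refine ae_restrict_of_forall_mem measurableSet_Ioo (fun x hx => ?_)
    rw [Real.norm_of_nonneg (mul_nonneg (abs_nonneg _) (hg0 x hx))]
    refine mul_le_of_le_one_left (hg0 x hx) ?_
    rw [abs_le]; constructor <;> linarith [hx.1, hx.2]
  change c / 6 * (∫ x in Set.Ioo (0 : ℝ) 1, g x) ≤ ∫ x in Set.Ioo (0 : ℝ) 1, |x - c| * g x
  set G := g (5 * c / 6)
  have hG : 0 ≤ G := hg0 _ ⟨by linarith, by linarith⟩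
  have hpoly : ∫ x in (0:ℝ)..(7 * c / 6), G * (5 * c / 6 - x) = G * (21 / 72 * c ^ 2) := by
    rw [intervalIntegral.integral_const_mul, intervalIntegral.integral_sub (by simp) (by simp)]
    simp
    left; ring
  have hmain : ∫ x in Set.Ioo (0:ℝ) 1, (Set.Ioc 0 (7 * c / 6)).indicator
        (fun x => G * (5 * c / 6 - x)) x
      ≤ ∫ x in Set.Ioo (0 : ℝ) 1, (|x - c| * g x - c / 6 * g x) := by
    refine setIntegral_mono_on ?_ (hgi.sub (hg.const_mul _)) measurableSet_Ioo ?_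
    · apply Integrable.integrableOn
      rw [integrable_indicator_iff measurableSet_Ioc]
      exact (Continuous.integrableOn_Icc (by fun_prop)).mono_set Set.Ioc_subset_Icc_self
    · intro x hx
      have h0 := hg0 x hx
      by_cases hxm : x ∈ Set.Ioc 0 (7 * c / 6)
      · rw [Set.indicator_of_mem hxm]
        have h1 : (5 * c / 6 - x) * g x ≤ (|x - c| - c / 6) * g x := by
          refine mul_le_mul_of_nonneg_right ?_ h0
          linarith [neg_abs_le (x - c)]
        have h2 : G * (5 * c / 6 - x) ≤ (5 * c / 6 - x) * g x := by
          rcases le_total x (5 * c / 6) with h | h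
          · have := hanti x (5 * c / 6) hx.1 h (by linarith)
            change G ≤ g x at this
            nlinarith
          · have := hanti (5 * c / 6) x (by linarith) h hx.2
            change g x ≤ G at this
            nlinarith
        linarith
      · rw [Set.indicator_of_notMem hxm]
        have : 7 * c / 6 < x := by
          by_contra h
          exact hxm ⟨hx.1, not_lt.mp h⟩
        have := le_abs_self (x - c)
        have : 0 ≤ (|x - c| - c / 6) * g x := mul_nonneg (by linarith) h0
        linarith
  have hsub : Set.Ioc 0 (7 * c / 6) ⊆ Set.Ioo (0 : ℝ) 1 :=
    fun x hx => ⟨hx.1, by linarith [hx.2]⟩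
  rw [setIntegral_indicator measurableSet_Ioc, Set.inter_eq_self_of_subset_right hsub,
    ← intervalIntegral.integral_of_le (by linarith), hpoly,
    integral_sub hgi (hg.const_mul _), integral_const_mul] at hmain
  have : 0 ≤ G * (21 / 72 * c ^ 2) := by positivity
  linarith

/-- Quantified counterexample in Appendix A of the paper (refuting Lemma C.1 of
Agrawal & Jia 2017): if `X` is `Beta(a,b)`-distributed with `0 < a ≤ 1 ≤ b`, then for every
integer `S ≥ 2`, `E[|X - 1/S|] ≥ 1/(6S)`. The law of `X` is given as the measure with density
`x^(a-1) * (1-x)^(b-1) / Z` on `(0,1)` with respect to Lebesgue measure. -/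
theorem stmt9 (a b : ℝ) (ha0 : 0 < a) (ha1 : a ≤ 1) (hb : 1 ≤ b)
    (Z : ℝ) (hZ : Z = ∫ x in Set.Ioo (0 : ℝ) 1, x ^ (a - 1) * (1 - x) ^ (b - 1))
    (μ : Measure ℝ)
    (hμ : μ = volume.withDensity (fun x => ENNReal.ofReal
      (Set.indicator (Set.Ioo (0 : ℝ) 1) (fun x => x ^ (a - 1) * (1 - x) ^ (b - 1) / Z) x)))
    (S : ℕ) (hS : 2 ≤ S) :
    1 / (6 * S) ≤ ∫ x, |x - 1 / S| ∂μ := by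
  have hS' : (2 : ℝ) ≤ S := by exact_mod_cast hS
  have hpos : ∀ x ∈ Set.Ioo (0 : ℝ) 1, 0 < x ^ (a - 1) * (1 - x) ^ (b - 1) := fun x hx =>
    mul_pos (Real.rpow_pos_of_pos hx.1 _) (Real.rpow_pos_of_pos (by linarith [hx.2]) _)
  have hsub : Set.Ioo (0 : ℝ) 1 ⊆
      Function.support (fun x : ℝ => x ^ (a - 1) * (1 - x) ^ (b - 1)) :=
    fun x hx => (hpos x hx).ne'
  have hZ0 : 0 < Z := by
    rw [hZ, setIntegral_pos_iff_support_of_nonneg_ae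
      (ae_restrict_of_forall_mem measurableSet_Ioo (fun x hx => (hpos x hx).le))
      (stmt9_integrable a b ha0 hb),
      Set.inter_eq_self_of_subset_right hsub]
    simp
  have hkey := stmt9_key a b ha0 ha1 hb (1 / S) (by positivity)
    (one_div_le_one_div_of_le (by norm_num) hS')
  rw [← hZ] at hkey
  have hint : ∫ x, |x - 1 / S| ∂μ =
      (∫ x in Set.Ioo (0 : ℝ) 1, |x - 1 / S| * (x ^ (a - 1) * (1 - x) ^ (b - 1))) / Z := by
    have hm : Measurable (Set.indicator (Set.Ioo (0 : ℝ) 1)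
        (fun x => x ^ (a - 1) * (1 - x) ^ (b - 1) / Z)) :=
      Measurable.indicator (by fun_prop) measurableSet_Ioo
    rw [hμ, integral_withDensity_eq_integral_toReal_smul hm.ennreal_ofReal
      (Filter.Eventually.of_forall fun x => ENNReal.ofReal_lt_top), ← integral_div,
      ← integral_indicator measurableSet_Ioo]
    refine integral_congr_ae (Filter.Eventually.of_forall fun x => ?_)
    by_cases hx : x ∈ Set.Ioo (0 : ℝ) 1
    · simp only [Set.indicator_of_mem hx, smul_eq_mul]
      rw [ENNReal.toReal_ofReal (div_pos (hpos x hx) hZ0).le]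
      ring
    · simp [Set.indicator_of_notMem hx]
  rw [hint, le_div_iff₀ hZ0]
  calc 1 / (6 * (S : ℝ)) * Z = 1 / S / 6 * Z := by ring
    _ ≤ _ := hkey
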